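/- Let z_1 and z_2 be linearly independent vectors in ℂ^M and let Z = { z_1 + z_2, −z_1 + z_2, z_1 − z_2, −z_1 − z_2 }. Then z_1 covers Z and z_2 covers Z, but z_1 + z_2 does not cover Z and z_2 − z_1 does not cover Z. -/

import Mathlib

/-!
Flipping the sign of `z1` (resp. `z2`) pairs each point of `Z` with another one, and the difference
is `±2 • z1` (resp. `±2 • z2`), so both vectors cover `Z`. Conversely, the differences from
`-z1 + z2` to the other points are `-2 z1`, `2 z2` and `2 (z2 - z1)`, none of which is a multiple of
`z1 + z2` by linear independence. For `z2 - z1` the point `z1 + z2` plays the same role.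
-/

/-- A nonzero vector `z` covers the pair of distinct points `v, v'` if `v - v'`
is a nonzero complex scalar multiple of `z`. -/
def CoversPair {M : ℕ} (z v v' : Fin M → ℂ) : Prop :=
  v ≠ v' ∧ ∃ c : ℂ, c ≠ 0 ∧ v - v' = c • z

/-- A nonzero vector `z` covers a finite set `Zs` if for every point `v` of `Zs`
there is another point `v'` of `Zs` such that `z` covers the pair `v, v'`. -/
def Covers {M : ℕ} (z : Fin M → ℂ) (Zs : Set (Fin M → ℂ)) : Prop :=
  ∀ v ∈ Zs, ∃ v' ∈ Zs, CoversPair z v v'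

/-- Moving by `c • z` with `c ≠ 0`, `z ≠ 0` really changes the point, so distinctness is automatic. -/
lemma coversPair_of_sub_eq {M : ℕ} {z v v' : Fin M → ℂ} (hz : z ≠ 0) (c : ℂ) (hc : c ≠ 0)
    (h : v - v' = c • z) : CoversPair z v v' := by
  refine ⟨fun e => ?_, c, hc, h⟩
  rw [e, sub_self] at h
  exact (smul_ne_zero hc hz) h.symm

theorem stmt2 (M : ℕ) (z1 z2 : Fin M → ℂ)
    (hli : LinearIndependent ℂ ![z1, z2])
    (Z : Set (Fin M → ℂ))
    (hZ : Z = {z1 + z2, -z1 + z2, z1 - z2, -z1 - z2}) :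
    Covers z1 Z ∧ Covers z2 Z ∧ ¬ Covers (z1 + z2) Z ∧ ¬ Covers (z2 - z1) Z := by
  subst hZ
  have hz1 : z1 ≠ 0 := hli.ne_zero 0
  have hz2 : z2 ≠ 0 := hli.ne_zero 1
  rw [LinearIndependent.pair_iff] at hli
  have h2 : (2 : ℂ) ≠ 0 := two_ne_zero
  have h2' : (-2 : ℂ) ≠ 0 := neg_ne_zero.mpr h2
  refine ⟨?_, ?_, ?_, ?_⟩
  · rintro v (rfl | rfl | rfl | rfl)
    · exact ⟨-z1 + z2, by simp, coversPair_of_sub_eq hz1 2 h2 (by module)⟩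
    · exact ⟨z1 + z2, by simp, coversPair_of_sub_eq hz1 (-2) h2' (by module)⟩
    · exact ⟨-z1 - z2, by simp, coversPair_of_sub_eq hz1 2 h2 (by module)⟩
    · exact ⟨z1 - z2, by simp, coversPair_of_sub_eq hz1 (-2) h2' (by module)⟩
  · rintro v (rfl | rfl | rfl | rfl)
    · exact ⟨z1 - z2, by simp, coversPair_of_sub_eq hz2 2 h2 (by module)⟩
    · exact ⟨-z1 - z2, by simp, coversPair_of_sub_eq hz2 2 h2 (by module)⟩
    · exact ⟨z1 + z2, by simp, coversPair_of_sub_eq hz2 (-2) h2' (by module)⟩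
    · exact ⟨-z1 + z2, by simp, coversPair_of_sub_eq hz2 (-2) h2' (by module)⟩
  · intro H
    obtain ⟨v', hv', hne, c, hc, h⟩ := H (-z1 + z2) (by simp)
    rcases hv' with rfl | rfl | rfl | rfl
    · have := (hli (-2 - c) (-c) (by linear_combination (norm := module) h)).2
      exact hc (neg_eq_zero.mp this)
    · exact hne rfl
    · obtain ⟨e1, e2⟩ := hli (-2 - c) (2 - c) (by linear_combination (norm := module) h)
      exact h2 (by linear_combination (e2 - e1) / 2)
    · have := (hli (-c) (2 - c) (by linear_combination (norm := module) h)).1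
      exact hc (neg_eq_zero.mp this)
  · intro H
    obtain ⟨v', hv', hne, c, hc, h⟩ := H (z1 + z2) (by simp)
    rcases hv' with rfl | rfl | rfl | rfl
    · exact hne rfl
    · have := (hli (2 + c) (-c) (by linear_combination (norm := module) h)).2
      exact hc (neg_eq_zero.mp this)
    · exact hc (hli c (2 - c) (by linear_combination (norm := module) h)).1
    · obtain ⟨e1, e2⟩ := hli (2 + c) (2 - c) (by linear_combination (norm := module) h)
      exact h2 (by linear_combination (e1 + e2) / 2)
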